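/- For the family of line arrangements A_d (d ≥ 8) defined below, one has r(A_d) = d − 4 for all d ≥ 8. -/

import Mathlib

open Classical MvPolynomial

variable {K : Type*} [Field K] [CharZero K] {ℓ : ℕ}

/-- A (central) hyperplane arrangement: a finite set of nonzero linear forms,
pairwise non-proportional. -/
def IsArrangement (A : Finset (MvPolynomial (Fin ℓ) K)) : Prop :=
  (∀ α ∈ A, α ≠ 0 ∧ α.IsHomogeneous 1) ∧
    ∀ α ∈ A, ∀ β ∈ A, α ≠ β → ∀ c : K, α ≠ c • β

/-- The arrangement is essential: the common zero set of its forms is `{0}`. -/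
def IsEssential (A : Finset (MvPolynomial (Fin ℓ) K)) : Prop :=
  ∀ v : Fin ℓ → K, (∀ α ∈ A, eval v α = 0) → v = 0

/-- The defining polynomial `Q(A)`. -/
noncomputable def Qpoly (A : Finset (MvPolynomial (Fin ℓ) K)) : MvPolynomial (Fin ℓ) K :=
  ∏ α ∈ A, α

/-- Apply a derivation `θ = Σ θ_j ∂_j` to a polynomial. -/
noncomputable def applyDer (θ : Fin ℓ → MvPolynomial (Fin ℓ) K)
    (f : MvPolynomial (Fin ℓ) K) : MvPolynomial (Fin ℓ) K :=
  ∑ j, θ j * pderiv j f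

/-- The minimal degree of a Jacobian relation `r(A)`. -/
noncomputable def mdr (A : Finset (MvPolynomial (Fin ℓ) K)) : ℕ :=
  sInf {r | ∃ θ : Fin ℓ → MvPolynomial (Fin ℓ) K, θ ≠ 0 ∧
    (∀ j, (θ j).IsHomogeneous r) ∧ applyDer θ (Qpoly A) = 0}

/-- The number of elements `|A^H|` of the restriction of `A` to `H`:
the number of distinct subspaces `H ∩ ker α_L`, `L ∈ A \ {H}`. -/
noncomputable def restCard (A : Finset (MvPolynomial (Fin ℓ) K))
    (H : MvPolynomial (Fin ℓ) K) : ℕ :=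
  ((A.erase H).image fun L => {v : Fin ℓ → K | eval v H = 0 ∧ eval v L = 0}).card

/-- The linear form `a·x + b·y − z` in `ℚ[x,y,z]`. -/
noncomputable def lineL (a b : ℚ) : MvPolynomial (Fin 3) ℚ :=
  C a * X 0 + C b * X 1 - X 2

/-- The arrangement `A_{3p+2}` of `3p+2` lines, `p ≥ 2`, with defining polynomial
`x·y·(x/2^{p+1} + y/3^{p+1} − z)·∏_{j=1}^{p} (x/2^j + y/3^j − z)(x/2^j + y/3^{j+1} − z)
·∏_{j=1}^{p−1} (x/2^j + y/3^{j+2} − z)`. -/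
noncomputable def baseA (p : ℕ) : Finset (MvPolynomial (Fin 3) ℚ) :=
  {X 0, X 1, lineL (1 / 2 ^ (p + 1)) (1 / 3 ^ (p + 1))} ∪
    (Finset.Icc 1 p).image (fun j => lineL (1 / 2 ^ j) (1 / 3 ^ j)) ∪
    (Finset.Icc 1 p).image (fun j => lineL (1 / 2 ^ j) (1 / 3 ^ (j + 1))) ∪
    (Finset.Icc 1 (p - 1)).image (fun j => lineL (1 / 2 ^ j) (1 / 3 ^ (j + 2)))

/-- The line `H_1 : 27x − 8y = 0`. -/
noncomputable def lineH1 : MvPolynomial (Fin 3) ℚ := C 27 * X 0 - C 8 * X 1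

/-- The line `H_2 : x − y = 0`. -/
noncomputable def lineH2 : MvPolynomial (Fin 3) ℚ := X 0 - X 1

/-- The family `A_d`, `d ≥ 8`: `A_{3p+2} = baseA p`, `A_{3p+3} = A_{3p+2} ∪ {H_1}`,
`A_{3p+4} = A_{3p+3} ∪ {H_2}`. -/
noncomputable def Afam (d : ℕ) : Finset (MvPolynomial (Fin 3) ℚ) :=
  if d % 3 = 2 then baseA ((d - 2) / 3)
  else if d % 3 = 0 then insert lineH1 (baseA ((d - 3) / 3))
  else insert lineH2 (insert lineH1 (baseA ((d - 4) / 3)))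

/-!
A Jacobian relation `θ` of degree `r` gives the polynomial 1-form `X ⨯₃ θ` of degree `r + 1`, which
is logarithmic along every line of the arrangement. A logarithmic form vanishes at the points where
a line `h` meets the others, so as soon as these outnumber the degree the form is divisible by `h`,
and the quotient is logarithmic along the remaining lines. The lines of `A_d` can be removed one
after another in this way, each of the `d` lines meeting enough points of its predecessors, and
this forces `r ≥ d - 4`. The points are counted by excluding concurrent triples: concurrency of
lines `x/2^i + y/3^j = z` amounts to an equation between powers of `2` and `3`, which divisibility
refutes.

Conversely `A_d` has a point `P` of multiplicity four. Differentiation along `P` kills the four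
lines through it, and subtracting a multiple of the Euler derivation makes it kill the product of
all lines, in degree `d - 4`.
-/

lemma totalDegree_aeval_le {R σ τ : Type*} [CommSemiring R] {g : σ → MvPolynomial τ R}
    (hg : ∀ i, (g i).IsHomogeneous 1) (f : MvPolynomial σ R) :
    (aeval g f).totalDegree ≤ f.totalDegree := by
  conv_lhs => rw [← sum_homogeneousComponent f, map_sum]
  refine totalDegree_finsetSum_le fun i hi => ?_
  have := ((homogeneousComponent_isHomogeneous i f).aeval g hg).totalDegree_le
  have := Finset.mem_range.1 hi
  omega

section LinearForms

variable {F σ : Type*} [Field F] [Fintype σ]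

/-- The linear form `∑ aᵢ Xᵢ` with coefficient vector `a`. -/
noncomputable def linForm : (σ → F) →ₗ[F] MvPolynomial σ F :=
  Fintype.linearCombination F X

lemma linForm_apply (a : σ → F) : linForm a = ∑ i, C (a i) * X i := by
  simp [linForm, Fintype.linearCombination_apply, smul_eq_C_mul]

lemma linForm_injective : Function.Injective (linForm : (σ → F) → MvPolynomial σ F) := by
  intro a b hab
  ext i
  simpa [linForm_apply, coeff_sum, coeff_C_mul, coeff_X, Finsupp.single_left_inj] using
    congrArg (coeff (Finsupp.single i 1)) hab

lemma isHomogeneous_linForm (a : σ → F) : (linForm a).IsHomogeneous 1 := by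
  rw [linForm_apply]
  exact .sum _ _ _ fun i _ => isHomogeneous_C_mul_X _ _

lemma linForm_ne_zero {a : σ → F} (ha : a ≠ 0) : linForm a ≠ 0 :=
  (map_ne_zero_iff linForm linForm_injective).2 ha

lemma totalDegree_linForm {a : σ → F} (ha : a ≠ 0) : (linForm a).totalDegree = 1 :=
  (isHomogeneous_linForm a).totalDegree (linForm_ne_zero ha)

lemma pderiv_linForm (i : σ) (a : σ → F) : pderiv i (linForm a) = C (a i) := by
  simp [linForm_apply, pderiv_X, Pi.single_apply]

/-- Restriction to the hyperplane `linForm h = 0`: the algebra map that eliminates the variable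
`X k`, which requires `h k ≠ 0`. -/
noncomputable def elimVar (h : σ → F) (k : σ) : MvPolynomial σ F →ₐ[F] MvPolynomial σ F :=
  aeval fun i => X i - if i = k then (h k)⁻¹ • linForm h else 0

variable {h : σ → F} {k : σ}

lemma linForm_dvd_sub_elimVar (f : MvPolynomial σ F) : linForm h ∣ f - elimVar h k f := by
  induction f using MvPolynomial.induction_on with
  | C c => simp [elimVar]
  | add f g hf hg => simpa only [map_add, add_sub_add_comm] using dvd_add hf hg
  | mul_X f i hf =>
    have hX : linForm h ∣ X i - elimVar h k (X i) := by
      by_cases hi : i = k <;> simp [elimVar, hi, smul_eq_C_mul]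
    have hsplit : f * X i - elimVar h k (f * X i) =
        (f - elimVar h k f) * X i + elimVar h k f * (X i - elimVar h k (X i)) := by
      rw [map_mul]
      ring
    rw [hsplit]
    exact (hf.mul_right _).add (hX.mul_left _)

lemma elimVar_linForm (a : σ → F) : elimVar h k (linForm a) = linForm (a - (a k / h k) • h) := by
  have hX (i : σ) : elimVar h k (C (a i) * X i) =
      C (a i) * X i - if i = k then (a i / h k) • linForm h else 0 := by
    split_ifs with hi <;> simp [elimVar, hi, div_eq_mul_inv, mul_smul, mul_sub, smul_eq_C_mul]
  rw [map_sub, map_smul, linForm_apply a, map_sum, Finset.sum_congr rfl fun i _ => hX i]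
  simp

lemma linForm_dvd_iff_elimVar_eq_zero (hk : h k ≠ 0) {f : MvPolynomial σ F} :
    linForm h ∣ f ↔ elimVar h k f = 0 := by
  constructor
  · rintro ⟨g, rfl⟩
    rw [map_mul, elimVar_linForm, div_self hk, one_smul, sub_self, map_zero, zero_mul]
  · intro hf
    simpa [hf] using linForm_dvd_sub_elimVar (h := h) (k := k) f

lemma totalDegree_elimVar_le (f : MvPolynomial σ F) :
    (elimVar h k f).totalDegree ≤ f.totalDegree := by
  refine totalDegree_aeval_le (fun i => (isHomogeneous_X F i).sub ?_) f
  split_ifs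
  · rw [← map_smul]
    exact isHomogeneous_linForm _
  · exact isHomogeneous_zero _ _ _

lemma prime_linForm (hh : h ≠ 0) : Prime (linForm h) := by
  obtain ⟨k, hk⟩ := Function.ne_iff.1 hh
  refine ⟨linForm_ne_zero hh, fun hu => ?_, fun f g hfg => ?_⟩
  · simpa using (linForm_dvd_iff_elimVar_eq_zero hk).1 (isUnit_iff_dvd_one.1 hu)
  · simpa only [linForm_dvd_iff_elimVar_eq_zero hk, map_mul, mul_eq_zero] using hfg

lemma not_linForm_dvd_linForm {a b : σ → F} (hab : LinearIndependent F ![a, b]) :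
    ¬ linForm a ∣ linForm b := by
  have ha : a ≠ 0 := hab.ne_zero 0
  obtain ⟨k, hk⟩ := Function.ne_iff.1 ha
  rw [linForm_dvd_iff_elimVar_eq_zero hk, elimVar_linForm, map_eq_zero_iff _ linForm_injective,
    sub_eq_zero, eq_comm]
  exact (LinearIndependent.pair_iff' ha).1 hab _

lemma isRelPrime_linForm {a b : σ → F} (hab : LinearIndependent F ![a, b]) :
    IsRelPrime (linForm a) (linForm b) :=
  ((prime_linForm (hab.ne_zero 0)).irreducible.isRelPrime_iff_not_dvd).2
    (not_linForm_dvd_linForm hab)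

lemma isHomogeneous_prod_linForm {ι : Type*} (T : Finset ι) (a : ι → σ → F) :
    (∏ i ∈ T, linForm (a i)).IsHomogeneous T.card := by
  simpa using IsHomogeneous.prod T _ (fun _ => 1) fun i _ => isHomogeneous_linForm (a i)

lemma prod_linForm_ne_zero {ι : Type*} {T : Finset ι} {a : ι → σ → F} (ha : ∀ i ∈ T, a i ≠ 0) :
    ∏ i ∈ T, linForm (a i) ≠ 0 :=
  Finset.prod_ne_zero_iff.2 fun i hi => linForm_ne_zero (ha i hi)

lemma eq_zero_of_forall_linForm_dvd {ι : Type*} {T : Finset ι} {a : ι → σ → F}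
    (ha : ∀ i ∈ T, a i ≠ 0)
    (hT : (T : Set ι).Pairwise fun i j => LinearIndependent F ![a i, a j]) {f : MvPolynomial σ F}
    (hf : ∀ i ∈ T, linForm (a i) ∣ f) (hdeg : f.totalDegree < T.card) : f = 0 := by
  by_contra hf0
  have hdvd : ∏ i ∈ T, linForm (a i) ∣ f :=
    Finset.prod_dvd_of_isRelPrime (fun i hi j hj hij => isRelPrime_linForm (hT hi hj hij)) hf
  have := totalDegree_le_of_dvd_of_isDomain hdvd hf0
  rw [(isHomogeneous_prod_linForm T a).totalDegree (prod_linForm_ne_zero ha)] at this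
  omega

lemma linearIndependent_sub_smul_pair {V : Type*} [AddCommGroup V] [Module F V] {u v w : V}
    (huvw : LinearIndependent F ![u, v, w]) (c d : F) :
    LinearIndependent F ![v - c • u, w - d • u] := by
  refine LinearIndependent.pair_iff.2 fun s t hst => ?_
  have hcomb := Fintype.linearIndependent_iff.1 huvw ![-(s * c + t * d), s, t] <| by
    rw [← hst]
    simp only [Fin.sum_univ_three, Matrix.cons_val]
    module
  exact ⟨hcomb 1, hcomb 2⟩

lemma linForm_dvd_of_mem_span {T : Finset (σ → F)}
    (hhT : ∀ a ∈ T, LinearIndependent F ![h, a])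
    (hT : (T : Set (σ → F)).Pairwise fun a b => LinearIndependent F ![h, a, b])
    {f : MvPolynomial σ F} (hf : ∀ a ∈ T, f ∈ Ideal.span {linForm h, linForm a})
    (hdeg : f.totalDegree < T.card) : linForm h ∣ f := by
  obtain ⟨b, hb⟩ := Finset.card_pos.1 (Nat.zero_lt_of_lt hdeg)
  have hh : h ≠ 0 := (hhT b hb).ne_zero 0
  obtain ⟨k, hk⟩ := Function.ne_iff.1 hh
  refine (linForm_dvd_iff_elimVar_eq_zero hk).2 <|
    eq_zero_of_forall_linForm_dvd (T := T) (a := fun a => a - (a k / h k) • h) (fun a ha h0 => ?_)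
      (fun a ha b hb hab => linearIndependent_sub_smul_pair (hT ha hb hab) _ _)
      (fun a ha => ?_) ((totalDegree_elimVar_le f).trans_lt hdeg)
  · exact (LinearIndependent.pair_iff' hh).1 (hhT a ha) _ (sub_eq_zero.1 h0).symm
  · obtain ⟨p, q, rfl⟩ := Ideal.mem_span_pair.1 (hf a ha)
    have hhk : elimVar h k (linForm h) = 0 := (linForm_dvd_iff_elimVar_eq_zero hk).1 dvd_rfl
    rw [map_add, map_mul, map_mul, hhk, mul_zero, zero_add, elimVar_linForm]
    exact dvd_mul_left _ _

end LinearForms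

section LogForms

variable {F σ : Type*} [Field F]

lemma exists_minor_ne_zero {a b : σ → F} (hab : LinearIndependent F ![a, b]) :
    ∃ i j, a i * b j - a j * b i ≠ 0 := by
  obtain ⟨i, hi⟩ := Function.ne_iff.1 (hab.ne_zero 0)
  by_contra! hminor
  refine hi (LinearIndependent.pair_iff.1 hab (b i) (-a i) ?_ |>.2 |> neg_eq_zero.1)
  ext j
  simpa [sub_eq_add_neg, mul_comm] using congrArg Neg.neg (hminor i j)

variable [Fintype σ]

/-- The polynomial 1-form `ω = ∑ Wᵢ dXᵢ` is logarithmic along the hyperplanes with normals in `N`: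
for each `a ∈ N` the form `linForm a` divides the coefficients of `d(linForm a) ∧ ω`. -/
def IsLogForm (N : Finset (σ → F)) (W : σ → MvPolynomial σ F) : Prop :=
  ∀ a ∈ N, ∀ i j, linForm a ∣ C (a i) * W j - C (a j) * W i

/-- There is no nonzero polynomial logarithmic 1-form of degree at most `#N - c` along `N`. -/
def NoLogForms (c : ℕ) (N : Finset (σ → F)) : Prop :=
  ∀ W : σ → MvPolynomial σ F, (∀ i, (W i).totalDegree + c ≤ N.card) → IsLogForm N W → W = 0

lemma noLogForms_of_card_lt [Nonempty σ] {c : ℕ} {N : Finset (σ → F)} (hN : N.card < c) :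
    NoLogForms c N := fun _ hdeg _ =>
  absurd (hdeg (Classical.arbitrary σ)) (by omega)

variable {N T : Finset (σ → F)} {h : σ → F} {W : σ → MvPolynomial σ F}

-- Where the hyperplanes of `h` and `a` meet, both `h ∧ W` and `a ∧ W` vanish; as `h` and `a` are
-- independent, so does `W`.
lemma IsLogForm.mem_span (hW : IsLogForm N W) (hh : h ∈ N) {a : σ → F} (ha : a ∈ N)
    (hha : LinearIndependent F ![h, a]) (k : σ) : W k ∈ Ideal.span {linForm h, linForm a} := by
  obtain ⟨i, j, hminor⟩ := exists_minor_ne_zero hha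
  have hspan {b : σ → F} (hb : b ∈ N) (hb' : linForm b ∈ Ideal.span {linForm h, linForm a})
      (i j : σ) : C (b i) * W j - C (b j) * W i ∈ Ideal.span {linForm h, linForm a} :=
    Ideal.mem_of_dvd _ (hW b hb i j) hb'
  have hmem_h := hspan hh (Ideal.subset_span (by simp))
  have hmem_a := hspan ha (Ideal.subset_span (by simp))
  have hwedge : C (h i * a j - h j * a i) * W k =
      C (a j) * (C (h i) * W k - C (h k) * W i) - C (h k) * (C (a i) * W j - C (a j) * W i)
        - C (a i) * (C (h j) * W k - C (h k) * W j) := by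
    simp only [map_sub, map_mul]
    ring
  refine (Ideal.unit_mul_mem_iff_mem _ ((isUnit_iff_ne_zero.2 hminor).map C)).1 (hwedge ▸ ?_)
  exact sub_mem (sub_mem (Ideal.mul_mem_left _ _ (hmem_h i k))
    (Ideal.mul_mem_left _ _ (hmem_a i j))) (Ideal.mul_mem_left _ _ (hmem_h j k))

lemma IsLogForm.linForm_dvd (hW : IsLogForm N W) (hh : h ∈ N) (hTN : T ⊆ N)
    (hhT : ∀ a ∈ T, LinearIndependent F ![h, a])
    (hT : (T : Set (σ → F)).Pairwise fun a b => LinearIndependent F ![h, a, b])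
    {k : σ} (hdeg : (W k).totalDegree < T.card) : linForm h ∣ W k :=
  linForm_dvd_of_mem_span hhT hT (fun a ha => hW.mem_span hh (hTN ha) (hhT a ha) k) hdeg

lemma IsLogForm.of_linForm_mul {V : σ → MvPolynomial σ F}
    (hW : IsLogForm N fun k => linForm h * V k)
    (hN : ∀ a ∈ N, LinearIndependent F ![h, a]) : IsLogForm N V := by
  intro a ha i j
  have hdvd : linForm a ∣ linForm h * (C (a i) * V j - C (a j) * V i) := by
    simpa only [mul_sub, mul_left_comm (linForm h)] using hW a ha i j
  have hah := hN a ha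
  rw [LinearIndependent.pair_symm_iff] at hah
  exact ((prime_linForm (hah.ne_zero 0)).dvd_or_dvd hdvd).resolve_left
    (not_linForm_dvd_linForm hah)

lemma NoLogForms.insert [DecidableEq (σ → F)] {c : ℕ} (hNo : NoLogForms c N) (hTN : T ⊆ N)
    (hcard : N.card + 2 ≤ T.card + c) (hN : ∀ a ∈ N, LinearIndependent F ![h, a])
    (hT : (T : Set (σ → F)).Pairwise fun a b => LinearIndependent F ![h, a, b]) :
    NoLogForms c (insert h N) := by
  intro W hdeg hW
  have hins := Finset.card_insert_le h N
  have hsub := Finset.subset_insert h N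
  choose V hV using fun k => hW.linForm_dvd (Finset.mem_insert_self h N) (hTN.trans hsub)
    (fun a ha => hN a (hTN ha)) hT (k := k) (by have := hdeg k; omega)
  obtain rfl : W = fun k => linForm h * V k := funext hV
  have hlog : IsLogForm N V := .of_linForm_mul (fun a ha => hW a (hsub ha)) hN
  by_contra hW0
  obtain ⟨j, hj⟩ := Function.ne_iff.1 hW0
  have hh : h ≠ 0 := by
    rintro rfl
    simp at hj
  have hVdeg {k : σ} (hk : V k ≠ 0) : (V k).totalDegree + c ≤ N.card := by
    have := hdeg k
    rw [totalDegree_mul_of_isDomain (linForm_ne_zero hh) hk, totalDegree_linForm hh] at this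
    omega
  have hVj := hVdeg (right_ne_zero_of_mul hj)
  have hV0 : V = 0 := hNo V (fun k => ?_) hlog
  · simp [hV0] at hj
  · by_cases hk : V k = 0
    · rw [hk, totalDegree_zero]
      omega
    · exact hVdeg hk

end LogForms

section JacobianRelations

open Matrix

variable {F : Type*} [Field F]

section

variable {n : ℕ} {θ : Fin n → MvPolynomial (Fin n) F} {f g : MvPolynomial (Fin n) F}

lemma applyDer_mul (θ : Fin n → MvPolynomial (Fin n) F) (f g : MvPolynomial (Fin n) F) :
    applyDer θ (f * g) = applyDer θ f * g + f * applyDer θ g := by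
  simp only [applyDer, pderiv_mul, Finset.sum_mul, Finset.mul_sum, ← Finset.sum_add_distrib]
  exact Finset.sum_congr rfl fun j _ => by ring

lemma applyDer_linForm (θ : Fin n → MvPolynomial (Fin n) F) (a : Fin n → F) :
    applyDer θ (linForm a) = ∑ j, C (a j) * θ j := by
  simp [applyDer, pderiv_linForm, mul_comm]

lemma applyDer_X_of_isHomogeneous {d : ℕ} (hf : f.IsHomogeneous d) : applyDer X f = d • f :=
  hf.sum_X_mul_pderiv

lemma applyDer_smul_sub_smul (p q : MvPolynomial (Fin n) F) (θ η : Fin n → MvPolynomial (Fin n) F)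
    (f : MvPolynomial (Fin n) F) :
    applyDer (p • θ - q • η) f = p * applyDer θ f - q * applyDer η f := by
  simp [applyDer, sub_mul, mul_assoc, Finset.mul_sum]

lemma applyDer_prod_eq_zero {ι : Type*} {S : Finset ι} {f : ι → MvPolynomial (Fin n) F}
    (hf : ∀ i ∈ S, applyDer θ (f i) = 0) : applyDer θ (∏ i ∈ S, f i) = 0 :=
  Finset.prod_induction f (fun g => applyDer θ g = 0)
    (fun g₁ g₂ h₁ h₂ => by simp [applyDer_mul, h₁, h₂]) (by simp [applyDer]) hf

lemma linForm_dvd_applyDer_linForm {N : Finset (Fin n → F)}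
    (hN : (N : Set (Fin n → F)).Pairwise fun a b => LinearIndependent F ![a, b])
    (hθ : applyDer θ (∏ a ∈ N, linForm a) = 0) {a : Fin n → F} (ha : a ∈ N) :
    linForm a ∣ applyDer θ (linForm a) := by
  have hrel : IsRelPrime (linForm a) (∏ b ∈ N.erase a, linForm b) :=
    .prod_right fun b hb =>
      isRelPrime_linForm (hN ha (Finset.mem_of_mem_erase hb) (Finset.ne_of_mem_erase hb).symm)
  rw [← Finset.mul_prod_erase N linForm ha, applyDer_mul] at hθ
  exact hrel.dvd_of_dvd_mul_right ((dvd_add_left (dvd_mul_right _ _)).1 (hθ ▸ dvd_zero _))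

lemma eq_zero_of_applyDer_eq_zero [CharZero F] {d : ℕ} (hf : f.IsHomogeneous d) (hd : d ≠ 0)
    (hf0 : f ≠ 0) (hθX : ∀ i j, X i * θ j = X j * θ i) (hθ : applyDer θ f = 0) : θ = 0 := by
  ext1 j
  have heuler : θ j * (d • f) = 0 := by
    have : X j * applyDer θ f = θ j * applyDer X f := by
      simp only [applyDer, Finset.mul_sum, ← mul_assoc, hθX j, mul_comm (θ j) (X _)]
    rw [← applyDer_X_of_isHomogeneous hf, ← this, hθ, mul_zero]
  simpa [hf0, hd] using heuler

lemma exists_applyDer_mul_eq_zero [CharZero F] [Nontrivial (Fin n)] {r s : ℕ}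
    (hf : f.IsHomogeneous (r + 1)) (hf0 : f ≠ 0) (hg : g.IsHomogeneous s) {P : Fin n → F}
    (hP : P ≠ 0) (hPg : applyDer (fun j => C (P j)) g = 0) :
    ∃ θ : Fin n → MvPolynomial (Fin n) F, θ ≠ 0 ∧ (∀ j, (θ j).IsHomogeneous (r + 1)) ∧
      applyDer θ (f * g) = 0 := by
  set q := applyDer (fun j => C (P j)) f with hq
  have hqhom : q.IsHomogeneous r := .sum _ _ _ fun j _ => by
    simpa using (isHomogeneous_C _ (P j)).mul hf.pderiv
  refine ⟨((r + 1 + s) • f) • (fun j => C (P j)) - q • X, fun hzero => ?_, fun j => ?_, ?_⟩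
  · obtain ⟨j, hj⟩ := Function.ne_iff.1 hP
    obtain ⟨i, hij⟩ := exists_ne j
    have hcoord (k : Fin n) : (r + 1 + s) • f * C (P k) = q * X k := by
      simpa [sub_eq_zero] using congrFun hzero k
    have hprop : C (P j) * X i = C (P i) * X j := by
      refine mul_left_cancel₀ (smul_ne_zero (show r + 1 + s ≠ 0 by omega) hf0) ?_
      rw [← mul_assoc, ← mul_assoc, hcoord, hcoord]
      ring
    exact hj <| by simpa [hij, pderiv_X] using congrArg (pderiv i) hprop
  · refine .sub ?_ ?_
    · simpa [mul_assoc] using (isHomogeneous_C (Fin n) ((r + 1 + s : ℕ) : F)).mul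
        (hf.mul (isHomogeneous_C (Fin n) (P j)))
    · exact hqhom.mul (isHomogeneous_X F j)
  · rw [applyDer_smul_sub_smul, applyDer_X_of_isHomogeneous (hf.mul hg), applyDer_mul, hPg, ← hq]
    simp only [nsmul_eq_mul]
    ring

lemma Qpoly_image_linForm [DecidableEq (MvPolynomial (Fin n) F)]
    (N : Finset (Fin n → F)) :
    Qpoly (N.image linForm) = ∏ a ∈ N, linForm a :=
  Finset.prod_image linForm_injective.injOn

lemma exists_applyDer_prod_eq_zero [CharZero F] [Nontrivial (Fin n)]
    {S N : Finset (Fin n → F)} (hSN : S ⊂ N) (h0 : 0 ∉ N) {P : Fin n → F} (hP : P ≠ 0)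
    (hSP : ∀ a ∈ S, a ⬝ᵥ P = 0) :
    ∃ θ : Fin n → MvPolynomial (Fin n) F, θ ≠ 0 ∧
      (∀ j, (θ j).IsHomogeneous (N.card - S.card)) ∧ applyDer θ (∏ a ∈ N, linForm a) = 0 := by
  have hcard : (N \ S).card = N.card - S.card := Finset.card_sdiff_of_subset hSN.subset
  obtain ⟨r, hr⟩ : ∃ r, N.card - S.card = r + 1 :=
    Nat.exists_eq_succ_of_ne_zero (Nat.sub_ne_zero_of_lt (Finset.card_lt_card hSN))
  have hf := isHomogeneous_prod_linForm (N \ S) id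
  rw [hcard, hr] at hf
  rw [hr, ← Finset.prod_sdiff hSN.subset]
  refine exists_applyDer_mul_eq_zero hf
    (prod_linForm_ne_zero fun a ha => ne_of_mem_of_not_mem (Finset.mem_sdiff.1 ha).1 h0)
    (isHomogeneous_prod_linForm S id) hP ?_
  refine applyDer_prod_eq_zero fun a ha => ?_
  have hdot : (C (a ⬝ᵥ P) : MvPolynomial (Fin n) F) = ∑ j, C (a j) * C (P j) := by
    simp [dotProduct]
  rw [applyDer_linForm, ← hdot, hSP a ha, C_0]

end

section Plane

lemma dvd_minor_of_dvd_cross {R : Type*} [CommRing R] {u v : Fin 3 → R} {d : R}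
    (hd : ∀ k, d ∣ (u ⨯₃ v) k) (i j : Fin 3) : d ∣ u i * v j - u j * v i := by
  have h0 : d ∣ u 1 * v 2 - u 2 * v 1 := by simpa [cross_apply] using hd 0
  have h1 : d ∣ u 2 * v 0 - u 0 * v 2 := by simpa [cross_apply] using hd 1
  have h2 : d ∣ u 0 * v 1 - u 1 * v 0 := by simpa [cross_apply] using hd 2
  fin_cases i <;> fin_cases j <;>
    first | assumption | (rw [dvd_sub_comm]; assumption) | simp

variable {θ : Fin 3 → MvPolynomial (Fin 3) F} {N : Finset (Fin 3 → F)}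

lemma isLogForm_cross_X (hθ : ∀ a ∈ N, linForm a ∣ applyDer θ (linForm a)) :
    IsLogForm N (X ⨯₃ θ) := by
  intro a ha
  have hcross (k : Fin 3) : linForm a ∣ ((fun i => C (a i)) ⨯₃ (X ⨯₃ θ)) k := by
    have hdot : (fun i => C (a i)) ⬝ᵥ θ = applyDer θ (linForm a) := (applyDer_linForm θ a).symm
    have hX : X ⬝ᵥ (fun i => C (a i)) = linForm a := by
      simp [dotProduct, linForm_apply, mul_comm]
    rw [cross_cross_eq_smul_sub_smul', hdot, hX]
    exact dvd_sub ((hθ a ha).mul_right _) (dvd_mul_right _ _)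
  exact dvd_minor_of_dvd_cross hcross

lemma totalDegree_cross_X_le {r : ℕ} (hθ : ∀ j, (θ j).IsHomogeneous r) (k : Fin 3) :
    ((X ⨯₃ θ) k).totalDegree ≤ r + 1 := by
  have hX (i j : Fin 3) : (X i * θ j).IsHomogeneous (r + 1) :=
    add_comm 1 r ▸ (isHomogeneous_X F i).mul (hθ j)
  rw [cross_apply]
  fin_cases k <;> exact ((hX _ _).sub (hX _ _)).totalDegree_le

lemma NoLogForms.card_le_of_applyDer_eq_zero [CharZero F] {c r : ℕ} (hNo : NoLogForms c N)
    (hN : (N : Set (Fin 3 → F)).Pairwise fun a b => LinearIndependent F ![a, b]) (h0 : 0 ∉ N)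
    (hθ0 : θ ≠ 0) (hθ : ∀ j, (θ j).IsHomogeneous r)
    (hrel : applyDer θ (∏ a ∈ N, linForm a) = 0) : N.card ≤ r + c := by
  by_contra! hlt
  have hcross : X ⨯₃ θ = 0 := by
    refine hNo _ (fun k => ?_) (isLogForm_cross_X fun a => linForm_dvd_applyDer_linForm hN hrel)
    have := totalDegree_cross_X_le hθ k
    omega
  have hprop (i j : Fin 3) : X i * θ j = X j * θ i :=
    sub_eq_zero.1 <| zero_dvd_iff.1 <| dvd_minor_of_dvd_cross (fun k => by simp [hcross]) i j
  exact hθ0 <| eq_zero_of_applyDer_eq_zero (isHomogeneous_prod_linForm N id)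
    (Nat.ne_zero_of_lt hlt)
    (prod_linForm_ne_zero fun a ha => ne_of_mem_of_not_mem ha h0) hprop hrel

lemma mdr_image_linForm [CharZero F] [DecidableEq (MvPolynomial (Fin 3) F)]
    {S : Finset (Fin 3 → F)} (hSN : S ⊂ N) (h0 : 0 ∉ N)
    (hN : (N : Set (Fin 3 → F)).Pairwise fun a b => LinearIndependent F ![a, b])
    (hNo : NoLogForms S.card N) {P : Fin 3 → F} (hP : P ≠ 0) (hSP : ∀ a ∈ S, a ⬝ᵥ P = 0) :
    mdr (N.image linForm) = N.card - S.card := by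
  simp only [mdr, Qpoly_image_linForm]
  refine IsLeast.csInf_eq ⟨exists_applyDer_prod_eq_zero hSN h0 hP hSP, ?_⟩
  rintro r ⟨θ, hθ0, hθ, hrel⟩
  exact Nat.sub_le_of_le_add (hNo.card_le_of_applyDer_eq_zero hN h0 hθ0 hθ hrel)

end Plane

end JacobianRelations

section PowerGrid

section

variable {p q : ℕ} [hp : Fact p.Prime] [hq : Fact q.Prime]

lemma padicNorm_one_div_pow (x : ℚ) (i : ℕ) : padicNorm p (1 / x ^ i) = 1 / padicNorm p x ^ i := by
  rw [padicNorm.div, padicNorm.one, IsAbsoluteValue.abv_pow (padicNorm p)]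

lemma padicNorm_one_div_pow_self (i : ℕ) : padicNorm p (1 / (p : ℚ) ^ i) = (p : ℚ) ^ i := by
  rw [padicNorm_one_div_pow, padicNorm.padicNorm_p_of_prime, inv_pow, one_div, inv_inv]

lemma padicNorm_pow_mul_sub_le_one (hpq : p ≠ q) (f j j' : ℕ) :
    padicNorm p ((q : ℚ) ^ f * (1 / (q : ℚ) ^ j - 1 / (q : ℚ) ^ j')) ≤ 1 := by
  have hq1 : padicNorm p q = 1 := padicNorm.padicNorm_of_prime_of_ne hpq
  rw [padicNorm.mul, IsAbsoluteValue.abv_pow (padicNorm p), hq1, one_pow, one_mul]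
  refine padicNorm.sub.trans ?_
  rw [padicNorm_one_div_pow, padicNorm_one_div_pow, hq1]
  simp

lemma padicNorm_pow_mul_sub_self {i i' : ℕ} (hi : i ≠ i') (e : ℕ) :
    padicNorm p ((p : ℚ) ^ e * (1 / (p : ℚ) ^ i - 1 / (p : ℚ) ^ i')) = p ^ max i i' / p ^ e := by
  have hp1 : (1 : ℚ) < p := mod_cast hp.out.one_lt
  have hne : (p : ℚ) ^ i ≠ (p : ℚ) ^ i' := (pow_right_injective₀ (by linarith) hp1.ne').ne hi
  rw [padicNorm.mul, IsAbsoluteValue.abv_pow (padicNorm p), padicNorm.padicNorm_p_of_prime,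
    sub_eq_add_neg, padicNorm.add_eq_max_of_ne] <;>
    rw [padicNorm.neg, padicNorm_one_div_pow_self, padicNorm_one_div_pow_self]
  · rw [(pow_right_mono₀ hp1.le).map_max, inv_pow, inv_mul_eq_div]
  · exact hne

lemma max_le_of_pow_mul_sub_eq (hpq : p ≠ q) {e f i i' j j' : ℕ} (hi : i ≠ i')
    (heq : (p : ℚ) ^ e * (1 / (p : ℚ) ^ i - 1 / (p : ℚ) ^ i') =
      (q : ℚ) ^ f * (1 / (q : ℚ) ^ j - 1 / (q : ℚ) ^ j')) : max i i' ≤ e := by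
  have hp1 : (1 : ℚ) < p := mod_cast hp.out.one_lt
  have hnorm := padicNorm_pow_mul_sub_le_one (p := p) hpq f j j'
  rw [← heq, padicNorm_pow_mul_sub_self hi, div_le_one (by positivity)] at hnorm
  exact (pow_le_pow_iff_right₀ hp1).1 hnorm

end

lemma one_div_pow_sub_one_div_pow {b : ℚ} (hb : b ≠ 0) (i m : ℕ) :
    1 / b ^ i - 1 / b ^ (i + m) = (b ^ m - 1) / b ^ (i + m) := by
  rw [pow_add]
  field_simp

lemma dvd_and_le_two_mul_of_mul_eq_mul {A B M N : ℕ} (hA : 1 < A) (hB : 1 < B) (hAB : A.Coprime B)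
    (h : M * A * (B - 1) = (A - 1) * N * B) : B ∣ M ∧ A ∣ N ∧ N ≤ 2 * M := by
  have hA' : A.Coprime (A - 1) := (Nat.coprime_self_sub_right hA.le).2 (Nat.coprime_one_right A)
  have hB' : B.Coprime (B - 1) := (Nat.coprime_self_sub_right hB.le).2 (Nat.coprime_one_right B)
  refine ⟨hAB.symm.dvd_of_dvd_mul_right (hB'.dvd_of_dvd_mul_right (h ▸ dvd_mul_left B _)),
    hA'.dvd_of_dvd_mul_left (hAB.dvd_of_dvd_mul_right (h ▸ ⟨M * (B - 1), by ring⟩)), ?_⟩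
  have hA2 : A ≤ 2 * (A - 1) := by omega
  refine Nat.le_of_mul_le_mul_right (c := (A - 1) * B) ?_ (Nat.mul_pos (by omega) (by omega))
  calc N * ((A - 1) * B) = M * A * (B - 1) := by rw [h]; ring
    _ ≤ M * (2 * (A - 1)) * B := by gcongr; omega
    _ = 2 * M * ((A - 1) * B) := by ring

lemma le_five_of_three_pow_le {m n : ℕ} (hmn : m ≤ n + 2) (h : 3 ^ n - 1 ≤ 2 * (2 ^ m - 1)) :
    n ≤ 5 := by
  by_contra! hn
  obtain ⟨k, rfl⟩ := Nat.exists_eq_add_of_le hn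
  have hpow : 2 ^ m ≤ 2 ^ (k + 8) := Nat.pow_le_pow_right two_pos (by omega)
  have hle : 2 ^ k ≤ 3 ^ k := Nat.pow_le_pow_left (by norm_num) k
  have hpos : 0 < 2 ^ m := by positivity
  rw [pow_add] at h hpow
  omega

lemma two_pow_three_pow_ratio_ne {m m' n n' : ℕ} (hm' : 1 ≤ m') (hn : 1 ≤ n) (hn' : 1 ≤ n')
    (hmn : m ≤ n + 2) :
    (2 ^ m - 1) * 2 ^ m' * (3 ^ n' - 1) ≠ (2 ^ m' - 1) * (3 ^ n - 1) * 3 ^ n' := by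
  intro h
  obtain ⟨hdvd3, hdvd2, hle⟩ := dvd_and_le_two_mul_of_mul_eq_mul
    (Nat.one_lt_two_pow (by omega)) (Nat.one_lt_pow (by omega) (by norm_num))
    (Nat.Coprime.pow m' n' (by norm_num)) h
  have hn5 := le_five_of_three_pow_le hmn hle
  have hm7 : m ≤ 7 := by omega
  have hNpos : 0 < 3 ^ n - 1 := Nat.sub_pos_of_lt (Nat.one_lt_pow (by omega) (by norm_num))
  have hm'7 : m' < 8 := by
    refine (Nat.pow_lt_pow_iff_right one_lt_two).1 ((Nat.le_of_dvd hNpos hdvd2).trans_lt ?_)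
    have : 3 ^ n ≤ 3 ^ 5 := Nat.pow_le_pow_right (by norm_num) hn5
    omega
  have hn'4 : n' < 5 := by
    refine (Nat.pow_lt_pow_iff_right (by norm_num : 1 < 3)).1
      ((Nat.le_of_dvd (by omega) hdvd3).trans_lt ?_)
    have : 2 ^ m ≤ 2 ^ 7 := Nat.pow_le_pow_right two_pos hm7
    omega
  interval_cases m <;> interval_cases n' <;> norm_num at hdvd3 <;>
    interval_cases n <;> interval_cases m' <;> omega

lemma pow_eq_pow_of_grid_collinear {i m m' j n n' : ℕ} (h : (1 / 2 ^ i - 1 / 2 ^ (i + m) : ℚ) *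
      (1 / 3 ^ (j + n) - 1 / 3 ^ (j + n + n')) =
      (1 / 2 ^ (i + m) - 1 / 2 ^ (i + m + m')) * (1 / 3 ^ j - 1 / 3 ^ (j + n))) :
    (2 ^ m - 1) * 2 ^ m' * (3 ^ n' - 1) = (2 ^ m' - 1) * (3 ^ n - 1) * 3 ^ n' := by
  simp only [one_div_pow_sub_one_div_pow (two_ne_zero : (2 : ℚ) ≠ 0),
    one_div_pow_sub_one_div_pow (three_ne_zero : (3 : ℚ) ≠ 0)] at h
  rw [pow_add 2 (i + m) m', pow_add 3 (j + n) n'] at h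
  field_simp at h
  qify
  simp only [Nat.cast_pred (Nat.pow_pos two_pos : 0 < 2 ^ _),
    Nat.cast_pred (Nat.pow_pos three_pos : 0 < 3 ^ _)]
  push_cast
  linear_combination h

/-- The exponent pairs `(i, j)` of the lines `x/2^i + y/3^j = z` allowed in the arrangements. -/
def Band (a : ℕ × ℕ) : Prop :=
  1 ≤ a.1 ∧ a.1 ≤ a.2 ∧ a.2 ≤ a.1 + 2

lemma one_div_pow_lt_one_div_pow_iff {b : ℚ} (hb : 1 < b) {i j : ℕ} :
    1 / b ^ i < 1 / b ^ j ↔ j < i :=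
  (one_div_pow_strictAnti hb).lt_iff_gt

lemma one_div_pow_injective {b : ℚ} (hb : 1 < b) : Function.Injective fun n : ℕ => 1 / b ^ n :=
  (one_div_pow_strictAnti hb).injective

lemma grid_not_collinear_of_lt {a b h : ℕ × ℕ} (ha : Band a) (hb : Band b) (hh : Band h)
    (ha1 : a.1 ≠ h.1) (hab : a.2 < b.2) (hbh : b.2 < h.2) :
    (1 / 2 ^ a.1 - 1 / 2 ^ b.1 : ℚ) * (1 / 3 ^ b.2 - 1 / 3 ^ h.2) ≠
      (1 / 2 ^ b.1 - 1 / 2 ^ h.1) * (1 / 3 ^ a.2 - 1 / 3 ^ b.2) := by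
  intro hcol
  have hy₁ : (0 : ℚ) < 1 / 3 ^ b.2 - 1 / 3 ^ h.2 :=
    sub_pos.2 ((one_div_pow_lt_one_div_pow_iff (by norm_num)).2 hbh)
  have hy₂ : (0 : ℚ) < 1 / 3 ^ a.2 - 1 / 3 ^ b.2 :=
    sub_pos.2 ((one_div_pow_lt_one_div_pow_iff (by norm_num)).2 hab)
  have hiff : a.1 < b.1 ↔ b.1 < h.1 := by
    rw [← one_div_pow_lt_one_div_pow_iff (one_lt_two : (1 : ℚ) < 2), ← sub_pos,
      ← mul_pos_iff_of_pos_right hy₁, hcol, mul_pos_iff_of_pos_right hy₂, sub_pos,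
      one_div_pow_lt_one_div_pow_iff one_lt_two]
  obtain ⟨i, j⟩ := a
  obtain ⟨-, ha₁₂, ha₂₁⟩ := ha
  obtain ⟨-, hb₁₂, -⟩ := hb
  obtain ⟨-, hh₁₂, hh₂₁⟩ := hh
  dsimp only at ha1 hab hcol hiff ha₁₂ ha₂₁
  obtain ⟨m, hm⟩ : ∃ m, b.1 = i + m := Nat.exists_eq_add_of_le (by omega)
  obtain ⟨n, hn⟩ := Nat.exists_eq_add_of_lt hab
  obtain ⟨m', hm'⟩ : ∃ m', h.1 = i + m + (m' + 1) :=
    Nat.exists_eq_add_of_lt (by omega)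
  obtain ⟨n', hn'⟩ := Nat.exists_eq_add_of_lt hbh
  rw [hn', hm', hm, hn, add_assoc, add_assoc] at hcol
  exact two_pow_three_pow_ratio_ne (by omega) (by omega) (by omega) (by omega)
    (pow_eq_pow_of_grid_collinear (j := j) hcol)

lemma grid_not_collinear {a b h : ℕ × ℕ} (ha : Band a) (hb : Band b) (hh : Band h) (hab : a ≠ b)
    (ha₁ : a.1 ≠ h.1) (hb₁ : b.1 ≠ h.1) (ha₂ : a.2 < h.2) (hb₂ : b.2 < h.2) :
    (1 / 2 ^ a.1 - 1 / 2 ^ h.1 : ℚ) * (1 / 3 ^ b.2 - 1 / 3 ^ h.2) ≠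
      (1 / 2 ^ b.1 - 1 / 2 ^ h.1) * (1 / 3 ^ a.2 - 1 / 3 ^ h.2) := by
  intro hcol
  rcases lt_trichotomy a.2 b.2 with hlt | heq | hgt
  · exact grid_not_collinear_of_lt ha hb hh ha₁ hlt hb₂ (by linear_combination hcol)
  · have hy : (1 / 3 ^ b.2 - 1 / 3 ^ h.2 : ℚ) ≠ 0 :=
      sub_ne_zero.2 ((one_div_pow_injective (by norm_num)).ne hb₂.ne)
    rw [heq, mul_left_inj' hy, sub_left_inj] at hcol
    exact hab (Prod.ext (one_div_pow_injective one_lt_two hcol) heq)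
  · exact grid_not_collinear_of_lt hb ha hh hb₁ hgt ha₂ (by linear_combination -hcol)

lemma max_le_of_pow_div_add_pow_div_eq {e : ℕ} {a b : ℕ × ℕ} (hab : a ≠ b)
    (heq : (2 ^ e / 2 ^ a.1 + 3 ^ e / 3 ^ a.2 : ℚ) = 2 ^ e / 2 ^ b.1 + 3 ^ e / 3 ^ b.2) :
    max a.1 b.1 ≤ e ∧ max b.2 a.2 ≤ e := by
  have hdiff : (2 : ℚ) ^ e * (1 / 2 ^ a.1 - 1 / 2 ^ b.1) = 3 ^ e * (1 / 3 ^ b.2 - 1 / 3 ^ a.2) := by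
    linear_combination heq
  have hiff : a.1 = b.1 ↔ b.2 = a.2 := by
    rw [← (one_div_pow_injective (one_lt_two : (1 : ℚ) < 2)).eq_iff,
      ← (one_div_pow_injective (by norm_num : (1 : ℚ) < 3)).eq_iff, ← sub_eq_zero,
      ← mul_eq_zero_iff_left (pow_ne_zero e (two_ne_zero : (2 : ℚ) ≠ 0)), hdiff,
      mul_eq_zero_iff_left (pow_ne_zero e three_ne_zero), sub_eq_zero]
  have h₁ : a.1 ≠ b.1 := fun h => hab (Prod.ext h (hiff.1 h).symm)
  exact ⟨max_le_of_pow_mul_sub_eq (p := 2) (q := 3) (by norm_num) h₁ (mod_cast hdiff),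
    max_le_of_pow_mul_sub_eq (p := 3) (q := 2) (by norm_num) (mt hiff.2 h₁) (mod_cast hdiff.symm)⟩

end PowerGrid

section Arrangements

open Matrix

lemma linearIndependent_triple_iff {F : Type*} [Field F] {u v w : Fin 3 → F} :
    LinearIndependent F ![u, v, w] ↔ u ⬝ᵥ v ⨯₃ w ≠ 0 := by
  rw [triple_product_eq_det, ← isUnit_iff_ne_zero]
  exact (linearIndependent_rows_iff_isUnit (A := of ![u, v, w])).trans (isUnit_iff_isUnit_det _)

lemma linearIndependent_triple_comm {F : Type*} [Field F] {u v w : Fin 3 → F}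
    (h : LinearIndependent F ![u, v, w]) : LinearIndependent F ![u, w, v] := by
  rwa [linearIndependent_triple_iff, ← cross_anticomm, dotProduct_neg, neg_ne_zero,
    ← linearIndependent_triple_iff]

/-- The normal of the line `x = 0`. -/
def normalX : Fin 3 → ℚ := ![1, 0, 0]

/-- The normal of the line `y = 0`. -/
def normalY : Fin 3 → ℚ := ![0, 1, 0]

/-- The normal of the line `3^e x = 2^e y` through the origin; `H₁` and `H₂` are the cases `e = 3`
and `e = 0`. -/
def originNormal (e : ℕ) : Fin 3 → ℚ := ![3 ^ e, -2 ^ e, 0]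

/-- The normal of the line `x/2^i + y/3^j = z` for `a = (i, j)`. -/
def gridNormal (a : ℕ × ℕ) : Fin 3 → ℚ := ![1 / 2 ^ a.1, 1 / 3 ^ a.2, -1]

/-- The normals of the arrangement of the two axes and the lines `x/2^i + y/3^j = z` for
`(i, j) ∈ I`. -/
def gridNormals (I : Finset (ℕ × ℕ)) : Finset (Fin 3 → ℚ) :=
  insert normalX (insert normalY (I.image gridNormal))

variable {I J : Finset (ℕ × ℕ)} {N : Finset (Fin 3 → ℚ)} {a b h : ℕ × ℕ}

lemma gridNormal_injective : Function.Injective gridNormal := fun a b hab =>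
  Prod.ext (one_div_pow_injective one_lt_two (congrFun hab 0))
    (one_div_pow_injective (by norm_num) (congrFun hab 1))

lemma gridNormals_insert (h : ℕ × ℕ) (I : Finset (ℕ × ℕ)) :
    gridNormals (insert h I) = insert (gridNormal h) (gridNormals I) := by
  simp only [gridNormals, Finset.image_insert, Finset.insert_comm (gridNormal h)]

lemma gridNormals_subset_gridNormals (hIJ : I ⊆ J) : gridNormals I ⊆ gridNormals J :=
  Finset.insert_subset_insert _ (Finset.insert_subset_insert _ (Finset.image_subset_image hIJ))

/-- All the normals that occur in the arrangements `A_d`. -/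
def allNormals : Set (Fin 3 → ℚ) :=
  insert (originNormal 0) <| insert (originNormal 3) <| insert normalX <| insert normalY <|
    Set.range gridNormal

lemma pairwise_linearIndependent_allNormals :
    allNormals.Pairwise fun u v => LinearIndependent ℚ ![u, v] := by
  have : Std.Symm fun u v : Fin 3 → ℚ => LinearIndependent ℚ ![u, v] :=
    ⟨fun _ _ => LinearIndependent.pair_symm_iff.1⟩
  have hgrid : (Set.range gridNormal).Pairwise fun u v => LinearIndependent ℚ ![u, v] := by
    rintro _ ⟨a, rfl⟩ _ ⟨b, rfl⟩ hab
    rw [← crossProduct_ne_zero_iff_linearIndependent]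
    contrapose hab
    have hy : (1 : ℚ) / 3 ^ a.2 = 1 / 3 ^ b.2 := by
      simpa [gridNormal, cross_apply, neg_add_eq_zero] using congrFun hab 0
    have hx : (1 : ℚ) / 2 ^ b.1 = 1 / 2 ^ a.1 := by
      simpa [gridNormal, cross_apply, neg_add_eq_zero] using congrFun hab 1
    rw [gridNormal, gridNormal, hx, hy]
  have horigin (e : ℕ) (a : ℕ × ℕ) : LinearIndependent ℚ ![originNormal e, gridNormal a] := by
    rw [← crossProduct_ne_zero_iff_linearIndependent]
    exact ne_of_apply_ne (· 0) (by simp [originNormal, gridNormal, cross_apply])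
  simp only [allNormals, Set.pairwise_insert_of_symm, Set.forall_mem_insert,
    Set.forall_mem_range, hgrid, horigin]
  simp only [← crossProduct_ne_zero_iff_linearIndependent]
  norm_num [normalX, normalY, originNormal, gridNormal, cross_apply]

lemma gridNormal_mem_allNormals (a : ℕ × ℕ) : gridNormal a ∈ allNormals := by
  simp [allNormals]

lemma gridNormals_subset_allNormals (I : Finset (ℕ × ℕ)) :
    (gridNormals I : Set (Fin 3 → ℚ)) ⊆ allNormals := by
  simp only [gridNormals, allNormals, Finset.coe_insert, Finset.coe_image]
  exact (Set.insert_subset_insert <| Set.insert_subset_insert <| Set.image_subset_range _ _).trans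
    ((Set.subset_insert _ _).trans (Set.subset_insert _ _))

lemma linearIndependent_of_notMem {u : Fin 3 → ℚ} (hu : u ∈ allNormals)
    (hN : (N : Set (Fin 3 → ℚ)) ⊆ allNormals) (huN : u ∉ N) :
    ∀ v ∈ N, LinearIndependent ℚ ![u, v] := fun _ hv =>
  pairwise_linearIndependent_allNormals hu (hN hv) (ne_of_mem_of_not_mem hv huN).symm

lemma gridNormal_mem_gridNormals_iff : gridNormal h ∈ gridNormals I ↔ h ∈ I := by
  have hX : gridNormal h ≠ normalX := by simp [gridNormal, normalX]
  have hY : gridNormal h ≠ normalY := by simp [gridNormal, normalY]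
  simp [gridNormals, hX, hY, gridNormal_injective.eq_iff]

lemma normalX_notMem_image_gridNormal : normalX ∉ I.image gridNormal := by
  simp [normalX, gridNormal]

lemma card_gridNormals (I : Finset (ℕ × ℕ)) : (gridNormals I).card = I.card + 2 := by
  have hX : normalX ∉ insert normalY (I.image gridNormal) := by
    simp [normalX, normalY, gridNormal]
  have hY : normalY ∉ I.image gridNormal := by
    simp [normalY, gridNormal]
  rw [gridNormals, Finset.card_insert_of_notMem hX, Finset.card_insert_of_notMem hY,
    Finset.card_image_of_injective _ gridNormal_injective]

-- A member of the band that shares one coordinate with `h` is determined by the difference of its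
-- coordinates, which takes three values, one of them at `h`.
lemma card_le_card_filter_ne_add_two (hI : ∀ a ∈ I, Band a) (hh : Band h)
    (hmax : ∀ a ∈ I, toLex (a.2, a.1) < toLex (h.2, h.1)) :
    I.card ≤ (I.filter fun a => a.1 ≠ h.1 ∧ a.2 ≠ h.2).card + 2 := by
  obtain ⟨-, hh₁₂, hh₂₁⟩ := hh
  have hcard : ((Finset.range 3).erase (h.2 - h.1)).card = 2 := by
    rw [Finset.card_erase_of_mem (Finset.mem_range.2 (by omega)), Finset.card_range]
  rw [← Finset.card_filter_add_card_filter_not (s := I) fun a => a.1 ≠ h.1 ∧ a.2 ≠ h.2]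
  refine Nat.add_le_add_left (hcard ▸ ?_) _
  simp only [Prod.Lex.toLex_lt_toLex] at hmax
  refine Finset.card_le_card_of_injOn (fun a => a.2 - a.1) (fun a ha => ?_) fun a ha b hb hab => ?_
  · obtain ⟨haI, hah⟩ := Finset.mem_filter.1 ha
    obtain ⟨-, ha₁₂, ha₂₁⟩ := hI a haI
    have := hmax a haI
    exact Finset.mem_erase.2 ⟨by dsimp only; omega, Finset.mem_range.2 (by dsimp only; omega)⟩
  · obtain ⟨haI, hah⟩ := Finset.mem_filter.1 ha
    obtain ⟨hbI, hbh⟩ := Finset.mem_filter.1 hb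
    obtain ⟨-, ha₁₂, ha₂₁⟩ := hI a haI
    obtain ⟨-, hb₁₂, hb₂₁⟩ := hI b hbI
    have := hmax a haI
    have := hmax b hbI
    dsimp only at hab
    exact Prod.ext (by omega) (by omega)

lemma linearIndependent_gridNormal_iff :
    LinearIndependent ℚ ![gridNormal h, gridNormal a, gridNormal b] ↔
      (1 / 2 ^ a.1 - 1 / 2 ^ h.1 : ℚ) * (1 / 3 ^ b.2 - 1 / 3 ^ h.2) ≠
        (1 / 2 ^ b.1 - 1 / 2 ^ h.1) * (1 / 3 ^ a.2 - 1 / 3 ^ h.2) := by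
  have hdet : gridNormal h ⬝ᵥ gridNormal a ⨯₃ gridNormal b =
      (1 / 2 ^ b.1 - 1 / 2 ^ h.1 : ℚ) * (1 / 3 ^ a.2 - 1 / 3 ^ h.2) -
        (1 / 2 ^ a.1 - 1 / 2 ^ h.1) * (1 / 3 ^ b.2 - 1 / 3 ^ h.2) := by
    simp only [gridNormal, cross_apply, vec3_dotProduct, Matrix.cons_val]
    ring
  rw [linearIndependent_triple_iff, hdet, sub_ne_zero, ne_comm]

lemma linearIndependent_gridNormal_normalX_iff :
    LinearIndependent ℚ ![gridNormal h, normalX, gridNormal a] ↔ h.2 ≠ a.2 := by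
  have hdet : gridNormal h ⬝ᵥ normalX ⨯₃ gridNormal a = 1 / 3 ^ h.2 - 1 / 3 ^ a.2 := by
    simp only [gridNormal, normalX, cross_apply, vec3_dotProduct, Matrix.cons_val]
    ring
  rw [linearIndependent_triple_iff, hdet, sub_ne_zero,
    (one_div_pow_injective (by norm_num : (1 : ℚ) < 3)).ne_iff]

lemma linearIndependent_gridNormal_normalY_iff :
    LinearIndependent ℚ ![gridNormal h, normalY, gridNormal a] ↔ h.1 ≠ a.1 := by
  have hdet : gridNormal h ⬝ᵥ normalY ⨯₃ gridNormal a = 1 / 2 ^ a.1 - 1 / 2 ^ h.1 := by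
    simp only [gridNormal, normalY, cross_apply, vec3_dotProduct, Matrix.cons_val]
    ring
  rw [linearIndependent_triple_iff, hdet, sub_ne_zero,
    (one_div_pow_injective (one_lt_two : (1 : ℚ) < 2)).ne_iff, ne_comm]

lemma pairwise_linearIndependent_gridNormal (hI : ∀ a ∈ I, Band a) (hh : Band h)
    (hI₁ : ∀ a ∈ I, a.1 ≠ h.1) (hI₂ : ∀ a ∈ I, a.2 < h.2) :
    (gridNormals I : Set (Fin 3 → ℚ)).Pairwise
      fun u v => LinearIndependent ℚ ![gridNormal h, u, v] := by
  have : Std.Symm fun u v : Fin 3 → ℚ => LinearIndependent ℚ ![gridNormal h, u, v] :=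
    ⟨fun _ _ => linearIndependent_triple_comm⟩
  have hXY : LinearIndependent ℚ ![gridNormal h, normalX, normalY] := by
    rw [linearIndependent_triple_iff]
    simp [gridNormal, normalX, normalY, cross_apply]
  simp only [gridNormals, Finset.coe_insert, Finset.coe_image, Set.pairwise_insert_of_symm,
    Set.forall_mem_insert, Set.forall_mem_image, linearIndependent_gridNormal_normalX_iff,
    linearIndependent_gridNormal_normalY_iff]
  refine ⟨⟨?_, fun a ha _ => (hI₁ a ha).symm⟩, fun _ => hXY, fun a ha _ => (hI₂ a ha).ne'⟩
  rintro _ ⟨a, ha, rfl⟩ _ ⟨b, hb, rfl⟩ hab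
  exact linearIndependent_gridNormal_iff.2 <| grid_not_collinear (hI a ha) (hI b hb) hh
    (ne_of_apply_ne _ hab) (hI₁ a ha) (hI₁ b hb) (hI₂ a ha) (hI₂ b hb)

lemma noLogForms_gridNormals (hI : ∀ a ∈ I, Band a) : NoLogForms 4 (gridNormals I) := by
  induction I using Finset.induction_on_max_value fun a : ℕ × ℕ => toLex (a.2, a.1) with
  | empty => exact noLogForms_of_card_lt (by simp [card_gridNormals])
  | insert h I hhI hle ih =>
    rw [Finset.forall_mem_insert] at hI
    have hlt (a) (ha : a ∈ I) : toLex (a.2, a.1) < toLex (h.2, h.1) :=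
      (hle a ha).lt_of_ne <| by simpa [Prod.ext_iff, and_comm] using ne_of_mem_of_not_mem ha hhI
    have hsub : I.filter (fun a => a.1 ≠ h.1 ∧ a.2 ≠ h.2) ⊆ I := Finset.filter_subset _ _
    rw [gridNormals_insert]
    refine (ih hI.2).insert (gridNormals_subset_gridNormals hsub) ?_
      (linearIndependent_of_notMem (gridNormal_mem_allNormals h) (gridNormals_subset_allNormals I)
        (mt gridNormal_mem_gridNormals_iff.1 hhI)) <|
      pairwise_linearIndependent_gridNormal (fun a ha => hI.2 a (hsub ha)) hI.1
        (fun a ha => (Finset.mem_filter.1 ha).2.1) fun a ha => ?_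
    · rw [card_gridNormals, card_gridNormals]
      have := card_le_card_filter_ne_add_two hI.2 hI.1 hlt
      omega
    · have := Prod.Lex.toLex_lt_toLex.1 (hlt a (hsub ha))
      have := (Finset.mem_filter.1 ha).2.2
      omega

lemma linearIndependent_originNormal_iff {e : ℕ} :
    LinearIndependent ℚ ![originNormal e, gridNormal a, gridNormal b] ↔
      (2 ^ e / 2 ^ a.1 + 3 ^ e / 3 ^ a.2 : ℚ) ≠ 2 ^ e / 2 ^ b.1 + 3 ^ e / 3 ^ b.2 := by
  have hdet : originNormal e ⬝ᵥ gridNormal a ⨯₃ gridNormal b =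
      (2 ^ e / 2 ^ b.1 + 3 ^ e / 3 ^ b.2 : ℚ) - (2 ^ e / 2 ^ a.1 + 3 ^ e / 3 ^ a.2) := by
    simp only [originNormal, gridNormal, cross_apply, vec3_dotProduct, Matrix.cons_val]
    ring
  rw [linearIndependent_triple_iff, hdet, sub_ne_zero, ne_comm]

lemma linearIndependent_originNormal_normalX (e : ℕ) (a : ℕ × ℕ) :
    LinearIndependent ℚ ![originNormal e, normalX, gridNormal a] := by
  rw [linearIndependent_triple_iff]
  simp [originNormal, normalX, gridNormal, cross_apply]

lemma noLogForms_insert_originNormal {e : ℕ} (hNo : NoLogForms 4 N) (hJN : gridNormals J ⊆ N)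
    (hcard : N.card ≤ J.card + 3) (hN : ∀ u ∈ N, LinearIndependent ℚ ![originNormal e, u])
    (hJ : Set.InjOn (fun a : ℕ × ℕ => (2 ^ e / 2 ^ a.1 + 3 ^ e / 3 ^ a.2 : ℚ)) J) :
    NoLogForms 4 (insert (originNormal e) N) := by
  refine hNo.insert (T := insert normalX (J.image gridNormal))
    ((Finset.insert_subset_insert _ (Finset.subset_insert _ _)).trans hJN) ?_ hN ?_
  · rw [Finset.card_insert_of_notMem normalX_notMem_image_gridNormal,
      Finset.card_image_of_injective _ gridNormal_injective]
    omega
  · have : Std.Symm fun u v : Fin 3 → ℚ => LinearIndependent ℚ ![originNormal e, u, v] :=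
      ⟨fun _ _ => linearIndependent_triple_comm⟩
    rw [Finset.coe_insert, Finset.coe_image, Set.pairwise_insert_of_symm, Set.forall_mem_image]
    refine ⟨?_, fun a _ _ => linearIndependent_originNormal_normalX e a⟩
    rintro _ ⟨a, ha, rfl⟩ _ ⟨b, hb, rfl⟩ hab
    exact linearIndependent_originNormal_iff.2 (hJ.ne ha hb (ne_of_apply_ne _ hab))

lemma originNormal_three_mem_allNormals : originNormal 3 ∈ allNormals := by
  simp [allNormals]

lemma originNormal_zero_mem_allNormals : originNormal 0 ∈ allNormals := by
  simp [allNormals]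

lemma originNormal_notMem_gridNormals (e : ℕ) : originNormal e ∉ gridNormals I := by
  simp [originNormal, gridNormals, normalX, normalY, gridNormal]

lemma originNormal_zero_notMem_insert :
    originNormal 0 ∉ insert (originNormal 3) (gridNormals I) := by
  rw [Finset.mem_insert, not_or]
  exact ⟨by norm_num [originNormal], originNormal_notMem_gridNormals 0⟩

-- The lines of `(1, 3)` and `(2, 2)` meet on `H₁`.
lemma injOn_pow_div_add_pow_div_three (hI : ∀ a ∈ I, Band a) :
    Set.InjOn (fun a : ℕ × ℕ => (2 ^ 3 / 2 ^ a.1 + 3 ^ 3 / 3 ^ a.2 : ℚ)) (I.erase (2, 2)) := by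
  intro a ha b hb heq
  by_contra hab
  have hle := max_le_of_pow_div_add_pow_div_eq hab heq
  have hsmall {c : ℕ × ℕ} (hc : c ∈ I.erase (2, 2)) (hc₁ : c.1 ≤ 3) (hc₂ : c.2 ≤ 3) :
      c ∈ ({(1, 1), (1, 2), (1, 3), (2, 3), (3, 3)} : Finset (ℕ × ℕ)) := by
    obtain ⟨hc22, hcI⟩ := Finset.mem_erase.1 hc
    obtain ⟨i, j⟩ := c
    obtain ⟨hi, hij, -⟩ := hI _ hcI
    dsimp only at *
    interval_cases i <;> interval_cases j <;> simp_all
  have ha' := hsmall ha (by omega) (by omega)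
  have hb' := hsmall hb (by omega) (by omega)
  fin_cases ha' <;> fin_cases hb' <;> first | exact hab rfl | norm_num at heq

lemma injOn_pow_div_add_pow_div_zero (hI : ∀ a ∈ I, Band a) :
    Set.InjOn (fun a : ℕ × ℕ => (2 ^ 0 / 2 ^ a.1 + 3 ^ 0 / 3 ^ a.2 : ℚ)) I := by
  intro a ha b _ heq
  by_contra hab
  have := (max_le_of_pow_div_add_pow_div_eq hab heq).1
  have := (hI a ha).1
  omega

lemma noLogForms_insert_originNormal_three (hI : ∀ a ∈ I, Band a) :
    NoLogForms 4 (insert (originNormal 3) (gridNormals I)) := by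
  refine noLogForms_insert_originNormal (noLogForms_gridNormals hI)
    (gridNormals_subset_gridNormals (I.erase_subset (2, 2))) ?_
    (linearIndependent_of_notMem originNormal_three_mem_allNormals
      (gridNormals_subset_allNormals I) (originNormal_notMem_gridNormals 3))
    (injOn_pow_div_add_pow_div_three hI)
  rw [card_gridNormals]
  have := Finset.pred_card_le_card_erase (s := I) (a := (2, 2))
  omega

lemma insert_originNormal_three_subset_allNormals (I : Finset (ℕ × ℕ)) :
    ((insert (originNormal 3) (gridNormals I) : Finset _) : Set (Fin 3 → ℚ)) ⊆ allNormals := by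
  rw [Finset.coe_insert]
  exact Set.insert_subset originNormal_three_mem_allNormals (gridNormals_subset_allNormals I)

lemma insert_insert_originNormal_subset_allNormals (I : Finset (ℕ × ℕ)) :
    ((insert (originNormal 0) (insert (originNormal 3) (gridNormals I)) : Finset _) :
      Set (Fin 3 → ℚ)) ⊆ allNormals := by
  rw [Finset.coe_insert]
  exact Set.insert_subset originNormal_zero_mem_allNormals
    (insert_originNormal_three_subset_allNormals I)

lemma card_insert_originNormal_three (I : Finset (ℕ × ℕ)) :
    (insert (originNormal 3) (gridNormals I)).card = I.card + 3 := by
  rw [Finset.card_insert_of_notMem (originNormal_notMem_gridNormals 3), card_gridNormals]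

lemma noLogForms_insert_insert_originNormal (hI : ∀ a ∈ I, Band a) :
    NoLogForms 4 (insert (originNormal 0) (insert (originNormal 3) (gridNormals I))) := by
  refine noLogForms_insert_originNormal (noLogForms_insert_originNormal_three hI)
    (Finset.subset_insert _ _) ?_
    (linearIndependent_of_notMem originNormal_zero_mem_allNormals
      (insert_originNormal_three_subset_allNormals I) originNormal_zero_notMem_insert)
    (injOn_pow_div_add_pow_div_zero hI)
  rw [card_insert_originNormal_three]

/-- The pairs `(i, j)` of the lines `x/2^i + y/3^j = z` of `A_{3p+2}`. -/
def bandIndex (p : ℕ) : Finset (ℕ × ℕ) :=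
  {(p + 1, p + 1)} ∪ (Finset.Icc 1 p).image (fun j => (j, j)) ∪
    (Finset.Icc 1 p).image (fun j => (j, j + 1)) ∪
    (Finset.Icc 1 (p - 1)).image (fun j => (j, j + 2))

lemma band_of_mem_bandIndex {p : ℕ} : ∀ a ∈ bandIndex p, Band a := by
  simp only [bandIndex, Finset.mem_union, Finset.mem_singleton, Finset.mem_image, Finset.mem_Icc]
  rintro _ (((rfl | ⟨j, hj, rfl⟩) | ⟨j, hj, rfl⟩) | ⟨j, hj, rfl⟩) <;>
    rw [Band] <;> dsimp only <;> omega

lemma card_bandIndex {p : ℕ} (hp : 1 ≤ p) : (bandIndex p).card = 3 * p := by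
  have hinj (f : ℕ → ℕ) : Function.Injective fun j => (j, f j) := fun _ _ h =>
    (Prod.mk.inj h).1
  rw [bandIndex, Finset.card_union_of_disjoint, Finset.card_union_of_disjoint,
    Finset.card_union_of_disjoint, Finset.card_singleton, Finset.card_image_of_injective _ (hinj _),
    Finset.card_image_of_injective _ (hinj _), Finset.card_image_of_injective _ (hinj _),
    Nat.card_Icc, Nat.card_Icc]
  · omega
  all_goals
    refine Finset.disjoint_left.2 fun ⟨i, j⟩ hleft hright => ?_
    simp only [Finset.mem_union, Finset.mem_image, Finset.mem_singleton, Finset.mem_Icc,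
      Prod.mk.injEq] at hleft hright
    grind

lemma linForm_normalX : linForm normalX = X 0 := by
  simp [linForm_apply, normalX, Fin.sum_univ_three]

lemma linForm_normalY : linForm normalY = X 1 := by
  simp [linForm_apply, normalY, Fin.sum_univ_three]

lemma linForm_gridNormal (a : ℕ × ℕ) :
    linForm (gridNormal a) = lineL (1 / 2 ^ a.1) (1 / 3 ^ a.2) := by
  simp [linForm_apply, gridNormal, lineL, Fin.sum_univ_three, sub_eq_add_neg]

lemma linForm_originNormal_three : linForm (originNormal 3) = lineH1 := by
  have h27 : (3 : ℚ) ^ 3 = 27 := by norm_num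
  have h8 : (2 : ℚ) ^ 3 = 8 := by norm_num
  simp [linForm_apply, originNormal, lineH1, h27, h8, Fin.sum_univ_three, sub_eq_add_neg]

lemma linForm_originNormal_zero : linForm (originNormal 0) = lineH2 := by
  simp [linForm_apply, originNormal, lineH2, Fin.sum_univ_three, sub_eq_add_neg]

lemma baseA_eq_image_linForm (p : ℕ) : baseA p = (gridNormals (bandIndex p)).image linForm := by
  simp only [baseA, gridNormals, bandIndex, Finset.image_insert, Finset.image_union,
    Finset.image_image, Finset.image_singleton, linForm_normalX, linForm_normalY,
    linForm_gridNormal, Function.comp_def, Finset.insert_union]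

lemma Afam_three_mul_add_two (p : ℕ) :
    Afam (3 * p + 2) = (gridNormals (bandIndex p)).image linForm := by
  have hmod : (3 * p + 2) % 3 = 2 := by omega
  have hdiv : (3 * p + 2 - 2) / 3 = p := by omega
  simp only [Afam, hmod, hdiv, if_true, baseA_eq_image_linForm]

lemma Afam_three_mul_add_three (p : ℕ) :
    Afam (3 * p + 3) =
      (insert (originNormal 3) (gridNormals (bandIndex p))).image linForm := by
  have hmod : (3 * p + 3) % 3 = 0 := by omega
  simp [Afam, hmod, baseA_eq_image_linForm, linForm_originNormal_three]

lemma Afam_three_mul_add_four (p : ℕ) :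
    Afam (3 * p + 4) = (insert (originNormal 0)
      (insert (originNormal 3) (gridNormals (bandIndex p)))).image linForm := by
  have hmod : (3 * p + 4) % 3 = 1 := by omega
  simp [Afam, hmod, baseA_eq_image_linForm, linForm_originNormal_three,
    linForm_originNormal_zero]

/-- The exponents of three lines that meet on `x = 0`, in the point `(0 : 27 : 1)`. -/
def concurrentIndex : Finset (ℕ × ℕ) := {(1, 3), (2, 3), (3, 3)}

lemma concurrentIndex_subset_bandIndex {p : ℕ} (hp : 2 ≤ p) : concurrentIndex ⊆ bandIndex p := by
  simp only [concurrentIndex, bandIndex, Finset.insert_subset_iff, Finset.singleton_subset_iff,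
    Finset.mem_union, Finset.mem_singleton, Finset.mem_image, Finset.mem_Icc, Prod.mk.injEq]
  refine ⟨.inr ⟨1, by omega⟩, .inl (.inr ⟨2, by omega⟩), ?_⟩
  obtain rfl | hp := hp.eq_or_lt
  · omega
  · exact .inl (.inl (.inr ⟨3, by omega⟩))

lemma mdr_image_linForm_eq_card_sub_four (hIN : gridNormals concurrentIndex ⊆ N)
    (hN : (N : Set (Fin 3 → ℚ)) ⊆ allNormals) (hNo : NoLogForms 4 N) :
    mdr (N.image linForm) = N.card - 4 := by
  have hpair := pairwise_linearIndependent_allNormals.mono hN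
  have hX : normalX ∈ N := hIN (by simp [gridNormals])
  have hY : normalY ∈ N := hIN (by simp [gridNormals])
  have h0 : 0 ∉ N := fun h0 =>
    (hpair h0 hX (ne_of_apply_ne (· 0) (by simp [normalX]))).ne_zero 0 rfl
  have hcard : (insert normalX (concurrentIndex.image gridNormal)).card = 4 := by
    rw [Finset.card_insert_of_notMem normalX_notMem_image_gridNormal,
      Finset.card_image_of_injective _ gridNormal_injective]
    rfl
  rw [← hcard] at hNo ⊢
  refine mdr_image_linForm (P := ![0, 27, 1]) ((Finset.ssubset_iff_of_subset ?_).2 ⟨_, hY, ?_⟩) h0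
    hpair hNo (by simp) ?_
  · exact (Finset.insert_subset_insert _ (Finset.subset_insert _ _)).trans hIN
  · simp [normalX, normalY, gridNormal]
  · norm_num [normalX, gridNormal, concurrentIndex]

end Arrangements

/-- For the family of line arrangements `A_d` (`d ≥ 8`) defined above,
one has `r(A_d) = d − 4` for all `d ≥ 8`. -/
theorem mdr_Afam (d : ℕ) (hd : 8 ≤ d) : mdr (Afam d) = d - 4 := by
  obtain ⟨p, hdp⟩ : ∃ p, d = 3 * p + 2 ∨ d = 3 * p + 3 ∨ d = 3 * p + 4 := ⟨(d - 2) / 3, by omega⟩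
  have hcard : (bandIndex p).card = 3 * p := card_bandIndex (by omega)
  have hsub : gridNormals concurrentIndex ⊆ gridNormals (bandIndex p) :=
    gridNormals_subset_gridNormals (concurrentIndex_subset_bandIndex (by omega))
  rcases hdp with rfl | rfl | rfl
  · rw [Afam_three_mul_add_two, mdr_image_linForm_eq_card_sub_four hsub
      (gridNormals_subset_allNormals _) (noLogForms_gridNormals band_of_mem_bandIndex),
      card_gridNormals, hcard]
  · rw [Afam_three_mul_add_three, mdr_image_linForm_eq_card_sub_four
      (hsub.trans (Finset.subset_insert _ _)) (insert_originNormal_three_subset_allNormals _)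
      (noLogForms_insert_originNormal_three band_of_mem_bandIndex),
      card_insert_originNormal_three, hcard]
  · rw [Afam_three_mul_add_four, mdr_image_linForm_eq_card_sub_four
      (hsub.trans ((Finset.subset_insert _ _).trans (Finset.subset_insert _ _)))
      (insert_insert_originNormal_subset_allNormals _)
      (noLogForms_insert_insert_originNormal band_of_mem_bandIndex),
      Finset.card_insert_of_notMem originNormal_zero_notMem_insert,
      card_insert_originNormal_three, hcard]
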